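/- arXiv:0710.1412 — 5 statements merged into one kernel-verified Lean document; each statement's English description precedes it below -/
import Mathlib

section
/- Let G be a group. If the abelianization G/[G,G] is infinite, then G is unbounded, i.e., G admits an unbounded conjugation-invariant norm. -/
/-- A conjugation-invariant norm on a group `G`. -/
def IsConjInvNorm {G : Type*} [Group G] (ν : G → ℝ) : Prop :=
  ν 1 = 0 ∧ (∀ f : G, 0 ≤ ν f) ∧ (∀ f : G, ν f⁻¹ = ν f) ∧
    (∀ f g : G, ν (f * g) ≤ ν f + ν g) ∧ (∀ f g : G, ν (g * f * g⁻¹) = ν f) ∧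
    (∀ f : G, f ≠ 1 → 0 < ν f)

def HasUnb (A : Type*) [AddCommGroup A] : Prop :=
  ∃ ν : A → ℝ, ν 0 = 0 ∧ (∀ a, 0 ≤ ν a) ∧ (∀ a, ν (-a) = ν a) ∧
    (∀ a b, ν (a + b) ≤ ν a + ν b) ∧ ∀ C : ℝ, ∃ a, C < ν a

theorem HasUnb.pull {A B : Type*} [AddCommGroup A] [AddCommGroup B] (f : A →+ B)
    (hf : Function.Surjective f) (h : HasUnb B) : HasUnb A := by
  obtain ⟨ν, h0, h1, h2, h3, h4⟩ := h
  refine ⟨fun a => ν (f a), by simp [h0], fun a => h1 _, fun a => by simp [h2],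
    fun a b => by simpa using h3 _ _, fun C => ?_⟩
  obtain ⟨b, hb⟩ := h4 C
  obtain ⟨a, rfl⟩ := hf b
  exact ⟨a, hb⟩

theorem hasUnb_infOrder {A : Type*} [AddCommGroup A] (a : A)
    (ha : ∀ n : ℤ, n • a = 0 → n = 0) : HasUnb A := by
  have hB : Module.Baer ℤ ℚ := Module.Baer.of_divisible ℚ
  obtain ⟨φ, hφ⟩ := hB.extension_property (LinearMap.toSpanSingleton ℤ A a)
    (by
      rw [← LinearMap.ker_eq_bot, LinearMap.ker_eq_bot']
      intro m hm
      exact ha m (by simpa using hm)) (LinearMap.toSpanSingleton ℤ ℚ 1)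
  have h1 : φ a = 1 := by
    have := LinearMap.congr_fun hφ 1
    simpa using this
  refine ⟨fun x => |((φ x : ℚ) : ℝ)|, by simp, fun x => abs_nonneg _, fun x => by simp,
    fun x y => by simpa using abs_add_le _ _, fun C => ?_⟩
  obtain ⟨n, hn⟩ := exists_nat_gt C
  refine ⟨n • a, ?_⟩
  dsimp only
  rw [map_nsmul, h1]
  simpa using hn

theorem hasUnb_chain {A : Type*} [AddCommGroup A] (H : ℕ → AddSubgroup A)
    (hm : Monotone H) (h0 : ∀ a, ∃ n, a ∈ H n) (hp : ∀ n, ∃ a, a ∉ H n) : HasUnb A := by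
  classical
  have key : ∀ a n, a ∈ H n → Nat.find (h0 a) ≤ n := fun a n h => Nat.find_min' _ h
  have spec : ∀ a, a ∈ H (Nat.find (h0 a)) := fun a => Nat.find_spec (h0 a)
  refine ⟨fun a => (Nat.find (h0 a) : ℝ), ?_, fun a => by positivity, fun a => ?_,
    fun a b => ?_, fun C => ?_⟩
  · dsimp only
    have := key 0 0 (H 0).zero_mem
    exact_mod_cast Nat.le_zero.mp this
  · dsimp only
    have h1 := key (-a) _ ((H _).neg_mem (spec a))
    have h2 := key a (Nat.find (h0 (-a))) (by simpa using (H (Nat.find (h0 (-a)))).neg_mem (spec (-a)))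
    exact_mod_cast le_antisymm h1 h2
  · dsimp only
    have := key (a + b) (Nat.find (h0 a) + Nat.find (h0 b))
      ((H _).add_mem (hm (Nat.le_add_right _ _) (spec a)) (hm (Nat.le_add_left _ _) (spec b)))
    exact_mod_cast this
  · obtain ⟨n, hn⟩ := exists_nat_gt C
    obtain ⟨a, ha⟩ := hp n
    refine ⟨a, hn.trans_le ?_⟩
    by_contra hlt
    push Not at hlt
    exact ha (hm (by exact_mod_cast hlt.le) (spec a))

theorem hasUnb_vec {p : ℕ} [Fact p.Prime] {A : Type*} [AddCommGroup A] [Module (ZMod p) A]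
    [Infinite A] : HasUnb A := by
  classical
  let b := Module.Basis.ofVectorSpace (ZMod p) A
  have hi : Infinite (Module.Basis.ofVectorSpaceIndex (ZMod p) A) := by
    by_contra hfin
    rw [not_infinite_iff_finite] at hfin
    have : Finite A := Finite.of_equiv _ b.equivFun.toEquiv.symm
    exact not_finite A
  refine ⟨fun a => ((b.repr a).support.card : ℝ), by simp, fun a => by positivity,
    fun a => by simp, fun x y => ?_, fun C => ?_⟩
  · have h1 := Finset.card_le_card (Finsupp.support_add (g₁ := b.repr x) (g₂ := b.repr y))
    have h2 := h1.trans (Finset.card_union_le _ _)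
    simp only [map_add]
    exact_mod_cast h2
  · obtain ⟨n, hn⟩ := exists_nat_gt C
    obtain ⟨s, hs⟩ := Infinite.exists_subset_card_eq (Module.Basis.ofVectorSpaceIndex (ZMod p) A) n
    refine ⟨b.repr.symm (Finsupp.indicator s fun _ _ => 1), ?_⟩
    have : (Finsupp.indicator s fun _ _ => (1 : ZMod p)).support = s := by
      ext i
      simp [Finsupp.indicator_apply]
    dsimp only
    rw [LinearEquiv.apply_symm_apply, this, hs]
    exact hn

theorem hasUnb_exp.{u} (m : ℕ) : ∀ (A : Type u) [AddCommGroup A] [Infinite A], m ≠ 0 →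
    (∀ a : A, m • a = 0) → HasUnb A := by
  induction m using Nat.strong_induction_on with
  | _ m ih =>
    intro A _ _ hm hA
    by_cases h1 : m = 1
    · subst h1
      have : Subsingleton A := ⟨fun x y => by
        have hx := hA x
        have hy := hA y
        simp at hx hy
        rw [hx, hy]⟩
      exact absurd (inferInstance : Finite A) (not_finite_iff_infinite.mpr inferInstance)
    obtain ⟨p, hp, k, rfl⟩ := Nat.exists_prime_and_dvd h1
    haveI : Fact p.Prime := ⟨hp⟩
    let f : A →+ A := nsmulAddMonoidHom p
    by_cases hr : Infinite f.range
    · refine HasUnb.pull f.rangeRestrict f.rangeRestrict_surjective ?_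
      have hk : k ≠ 0 := by rintro rfl; simp at hm
      refine ih k ?_ f.range hk ?_
      · have := hp.two_le
        nlinarith [Nat.pos_of_ne_zero hk]
      · rintro ⟨_, a, rfl⟩
        ext
        have := hA a
        rw [mul_comm, mul_smul] at this
        simpa [f] using this
    · have hq : Infinite (A ⧸ f.range) := by
        by_contra hfin
        rw [not_infinite_iff_finite] at hfin hr
        have : Finite ((A ⧸ f.range) × f.range) := inferInstance
        have : Finite A := Finite.of_equiv _ (AddSubgroup.addGroupEquivQuotientProdAddSubgroup (s := f.range)).symm
        exact not_finite A
      refine HasUnb.pull (QuotientAddGroup.mk' f.range) (QuotientAddGroup.mk'_surjective _) ?_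
      letI : Module (ZMod p) (A ⧸ f.range) := AddCommGroup.zmodModule (n := p) (by
        intro x
        obtain ⟨a, rfl⟩ := QuotientAddGroup.mk'_surjective _ x
        rw [← map_nsmul]
        simp only [QuotientAddGroup.mk'_apply]
        rw [QuotientAddGroup.eq_zero_iff]
        exact ⟨a, rfl⟩)
      exact hasUnb_vec (p := p)

theorem hasUnb_all (A : Type*) [AddCommGroup A] [Infinite A] : HasUnb A := by
  by_cases h1 : ∃ a : A, ∀ n : ℤ, n • a = 0 → n = 0
  · obtain ⟨a, ha⟩ := h1
    exact hasUnb_infOrder a ha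
  push Not at h1
  by_cases h2 : ∃ m : ℕ, m ≠ 0 ∧ ∀ a : A, m • a = 0
  · obtain ⟨m, hm, h⟩ := h2
    exact hasUnb_exp m A hm h
  push Not at h2
  refine hasUnb_chain (fun n => (nsmulAddMonoidHom (α := A) n.factorial).ker) ?_ ?_ ?_
  · intro i j hij a ha
    obtain ⟨c, hc⟩ := Nat.factorial_dvd_factorial hij
    simp only [AddMonoidHom.mem_ker, nsmulAddMonoidHom_apply] at ha ⊢
    rw [hc, mul_comm, mul_smul, ha, smul_zero]
  · intro a
    obtain ⟨n, hn, hn0⟩ := h1 a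
    refine ⟨n.natAbs, ?_⟩
    obtain ⟨c, hc⟩ := Nat.dvd_factorial (Int.natAbs_pos.mpr hn0) le_rfl
    have h3 : n.natAbs • a = 0 := by
      rw [← natCast_zsmul]
      rcases Int.natAbs_eq n with h | h
      · rw [← h]; exact hn
      · rw [h, neg_smul, neg_eq_zero] at hn; exact hn
    simp only [AddMonoidHom.mem_ker, nsmulAddMonoidHom_apply]
    rw [hc, mul_comm, mul_smul, h3, smul_zero]
  · intro n
    obtain ⟨a, ha⟩ := h2 _ n.factorial_ne_zero
    exact ⟨a, by simpa using ha⟩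

/-- If the abelianization of `G` is infinite, then `G` admits an unbounded
conjugation-invariant norm. -/
theorem unbounded_of_infinite_abelianization {G : Type*} [Group G]
    (h : Infinite (Abelianization G)) :
    ∃ ν : G → ℝ, IsConjInvNorm ν ∧ ∀ C : ℝ, ∃ g : G, C < ν g := by
  classical
  haveI : Infinite (Additive (Abelianization G)) := h
  obtain ⟨ν, h0, h1, h2, h3, h4⟩ := hasUnb_all (Additive (Abelianization G))
  let q : G → Additive (Abelianization G) := fun g => Additive.ofMul (Abelianization.of g)
  have q1 : q 1 = 0 := by simp [q]
  have qm : ∀ f g, q (f * g) = q f + q g := fun f g => by simp [q]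
  have qi : ∀ f, q f⁻¹ = - q f := fun f => by simp [q]
  refine ⟨fun g => ν (q g) + if g = 1 then 0 else 1, ⟨?_, ?_, ?_, ?_, ?_, ?_⟩, ?_⟩
  · simp [q1, h0]
  · intro f
    have := h1 (q f)
    dsimp only
    split_ifs <;> linarith
  · intro f
    simp [qi, h2]
  · intro f g
    have := h3 (q f) (q g)
    rw [← qm] at this
    dsimp only
    by_cases hf : f = 1
    · subst hf; simp [q1, h0]
    · simp only [hf, if_false]
      split_ifs <;> linarith
  · intro f g
    have : q (g * f * g⁻¹) = q f := by rw [qm, qm, qi]; abel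
    simp [this]
  · intro f hf
    have := h1 (q f)
    simp only [hf, if_false]
    linarith
  · intro C
    obtain ⟨a, ha⟩ := h4 C
    obtain ⟨g, hg⟩ := QuotientGroup.mk_surjective (Additive.toMul a)
    refine ⟨g, ?_⟩
    have : q g = a := by
      apply Additive.toMul.injective
      exact hg
    dsimp only
    rw [this]
    split_ifs <;> linarith
end

section
/- Every infinite abelian group admits an unbounded conjugation-invariant norm. -/
theorem exists_hom_countable (M : Type*) [AddCommGroup M] [Infinite M] :
    ∃ (D : Type) (_ : AddCommGroup D) (_ : Countable D) (h : M →+ D),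
      (Set.range h).Infinite := by
  classical
  let x := Infinite.natEmbedding M
  let p : (ℕ →₀ ℤ) →ₗ[ℤ] M := Finsupp.linearCombination ℤ x
  let i : (ℕ →₀ ℤ) →ₗ[ℤ] (ℕ →₀ ℚ) :=
    Finsupp.mapRange.linearMap (Int.castAddHom ℚ).toIntLinearMap
  have hi : Function.Injective i :=
    Finsupp.mapRange_injective _ (by simp) (fun a b hab => by simpa using hab)
  let K := (LinearMap.ker p).map i
  let D := (ℕ →₀ ℚ) ⧸ K
  have hc : Countable D := Quotient.countable
  have hdiv : ∀ (d : D) (n : ℤ), ∃ e : D, (n = 0 → e = 0) ∧ (n ≠ 0 → n • e = d) := by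
    intro d n
    by_cases hn : n = 0
    · exact ⟨0, by simp, fun h => absurd hn h⟩
    · obtain ⟨v, rfl⟩ := Submodule.Quotient.mk_surjective K d
      refine ⟨Submodule.Quotient.mk ((n : ℚ)⁻¹ • v), fun h => absurd h hn, fun _ => ?_⟩
      rw [← Submodule.Quotient.mk_smul]
      congr 1
      ext k
      have : (n : ℚ) ≠ 0 := by exact_mod_cast hn
      simp
      field_simp
  choose dv h0 h1 using hdiv
  letI : DivisibleBy D ℤ := ⟨dv, fun a => h0 a 0 rfl, fun a hn => h1 a _ hn⟩
  let f : ((ℕ →₀ ℤ) ⧸ LinearMap.ker p) →ₗ[ℤ] D :=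
    Submodule.mapQ _ K i (Submodule.le_comap_map _ _)
  let j : ((ℕ →₀ ℤ) ⧸ LinearMap.ker p) →ₗ[ℤ] M := (LinearMap.ker p).liftQ p le_rfl
  have hj : Function.Injective j := LinearMap.ker_eq_bot.1 (Submodule.ker_liftQ_eq_bot _ _ _ le_rfl)
  obtain ⟨h, hh⟩ := (Module.Baer.of_divisible D).extension_property j hj f
  refine ⟨D, inferInstance, hc, h.toAddMonoidHom, ?_⟩
  have key : ∀ v, h (p v) = Submodule.Quotient.mk (i v) := fun v =>
    LinearMap.congr_fun hh (Submodule.Quotient.mk v)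
  have px : ∀ n, p (Finsupp.single n 1) = x n := fun n => by simp [p]
  have inj : Function.Injective (fun n => h (x n)) := by
    intro n m hnm
    simp only [← px, key] at hnm
    rw [Submodule.Quotient.eq, ← map_sub] at hnm
    obtain ⟨k, hk, hk2⟩ := hnm
    rw [hi hk2] at hk
    have : p (Finsupp.single n 1 - Finsupp.single m 1) = 0 := hk
    rw [map_sub, px, px, sub_eq_zero] at this
    exact x.injective this
  exact (Set.infinite_range_of_injective inj).mono (by rintro _ ⟨n, rfl⟩; exact ⟨x n, rfl⟩)

theorem exists_balls (D : Type) [AddCommGroup D] [Countable D] :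
    ∃ B : ℕ → Set D, (∀ n, (B n).Finite) ∧ 0 ∈ B 0 ∧ (∀ d, ∃ n, d ∈ B n) ∧
      Monotone B ∧ (∀ n d, d ∈ B n → -d ∈ B n) ∧
      (∀ m n d e, d ∈ B m → e ∈ B n → d + e ∈ B (m + n)) := by
  classical
  obtain ⟨c, hc⟩ := exists_injective_nat D
  let w : D → ℕ := fun d => c d + c (-d) + 1
  have hw : ∀ d, w (-d) = w d := fun d => by simp [w, add_comm]
  have hS : ∀ n, {d | w d ≤ n}.Finite := fun n =>
    ((Set.finite_Iic n).preimage hc.injOn).subset (fun d hd => by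
      simp only [Set.mem_setOf_eq, w] at hd
      simp only [Set.mem_preimage, Set.mem_Iic]
      omega)
  let L : ℕ → Set (List D) := fun n => {l | (l.map w).sum ≤ n}
  have hL : ∀ n, (L n).Finite := by
    intro n
    induction n with
    | zero =>
      refine (Set.finite_singleton []).subset ?_
      rintro (_ | ⟨a, l⟩) hl
      · simp
      · simp [L, w] at hl
    | succ n ih =>
      refine ((Set.finite_singleton []).union ((hS (n+1)).image2 List.cons ih)).subset ?_
      rintro (_ | ⟨a, l⟩) hl
      · simp
      · right
        simp only [L, Set.mem_setOf_eq, List.map_cons, List.sum_cons] at hl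
        have : 1 ≤ w a := by simp [w]
        exact ⟨a, by simp only [Set.mem_setOf_eq]; omega, l, by
          simp only [L, Set.mem_setOf_eq]; omega, rfl⟩
  refine ⟨fun n => List.sum '' L n, fun n => (hL n).image _, ⟨[], by simp [L], rfl⟩,
    fun d => ⟨w d, [d], by simp [L], by simp⟩, ?_, ?_, ?_⟩
  · intro m n hmn
    exact Set.image_mono (fun l (hl : _ ≤ m) => (hl.trans hmn : _ ≤ n))
  · rintro n _ ⟨l, hl, rfl⟩
    refine ⟨l.map Neg.neg, ?_, ?_⟩
    · have : w ∘ Neg.neg = w := funext hw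
      simpa [L, this] using hl
    · exact (List.sum_neg l).symm
  · rintro m n _ _ ⟨l, hl, rfl⟩ ⟨k, hk, rfl⟩
    refine ⟨l ++ k, ?_, by simp⟩
    simp only [L, Set.mem_setOf_eq, List.map_append, List.sum_append] at *
    omega

/-- Every infinite abelian group admits an unbounded conjugation-invariant norm. -/
theorem infinite_abelian_admits_unbounded_norm (G : Type*) [CommGroup G] [Infinite G] :
    ∃ ν : G → ℝ, IsConjInvNorm ν ∧ ∀ C : ℝ, ∃ g : G, C < ν g := by
  classical
  obtain ⟨D, _, _, h, hinf⟩ := exists_hom_countable (Additive G)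
  obtain ⟨B, hfin, hz, hex, hmono, hneg, hadd⟩ := exists_balls D
  let q : D → ℕ := fun d => Nat.find (hex d)
  have q_mem : ∀ d, d ∈ B (q d) := fun d => Nat.find_spec (hex d)
  have q_le : ∀ d n, d ∈ B n → q d ≤ n := fun d n hd => Nat.find_min' (hex d) hd
  have q0 : q 0 = 0 := Nat.le_zero.1 (q_le _ _ hz)
  have qneg' : ∀ d, q (-d) ≤ q d := fun d => q_le _ _ (hneg _ _ (q_mem d))
  have qneg : ∀ d, q (-d) = q d := fun d =>
    le_antisymm (qneg' d) (by simpa using qneg' (-d))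
  have qadd : ∀ d e, q (d + e) ≤ q d + q e := fun d e =>
    q_le _ _ (hadd _ _ _ _ (q_mem d) (q_mem e))
  let φ : G → D := fun g => h (Additive.ofMul g)
  let δ : G → ℝ := fun g => if g = 1 then 0 else 1
  have δ0 : ∀ g, 0 ≤ δ g := fun g => by simp only [δ]; split_ifs <;> norm_num
  refine ⟨fun g => (q (φ g) : ℝ) + δ g, ⟨?_, ?_, ?_, ?_, ?_, ?_⟩, ?_⟩
  · simp [φ, δ, q0]
  · intro g
    have := δ0 g
    positivity
  · intro g
    simp [φ, δ, qneg]
  · intro f g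
    have h1 : (q (φ (f * g)) : ℝ) ≤ q (φ f) + q (φ g) := by
      have := qadd (φ f) (φ g)
      rw [show φ (f * g) = φ f + φ g by simp [φ]]
      exact_mod_cast this
    have h2 : δ (f * g) ≤ δ f + δ g := by
      by_cases hf : f = 1
      · simp [hf, δ]
      · have := δ0 g
        have hf1 : δ f = 1 := by simp [δ, hf]
        have : δ (f * g) ≤ 1 := by simp only [δ]; split_ifs <;> norm_num
        linarith
    linarith
  · intro f g
    rw [mul_comm g f, mul_inv_cancel_right]
  · intro f hf
    have : δ f = 1 := by simp [δ, hf]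
    beta_reduce
    rw [this]
    positivity
  · intro C
    by_contra! hC
    apply hinf
    refine (hfin ⌈C⌉₊).subset ?_
    rintro _ ⟨g, rfl⟩
    have h1 := hC (Additive.toMul g)
    have h2 := δ0 (Additive.toMul g)
    have h3 : (q (h g) : ℝ) ≤ C := by
      have : φ (Additive.toMul g) = h g := rfl
      rw [this] at h1
      linarith
    have h4 : q (h g) ≤ ⌈C⌉₊ := by exact_mod_cast h3.trans (Nat.le_ceil C)
    exact hmono h4 (q_mem _)
end

section
/- If a group G admits a quasi-norm, then G admits an unbounded conjugation-invariant norm. (The norm is obtained from the quasi-norm by symmetrization q(a) ↦ max(q(a), q(a⁻¹)), then replacing q(a) by the supremum of q over the conjugacy class of a, and then adding a sufficiently large constant to the value at every element other than the identity.) -/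
/-- A quasi-norm on a group `G`: a nonnegative, quasi-subadditive,
quasi-conjugation-invariant, unbounded function. -/
def IsQuasiNorm {G : Type*} [Group G] (q : G → ℝ) : Prop :=
  (∀ a : G, 0 ≤ q a) ∧
    (∃ c : ℝ, (∀ a b : G, q (a * b) ≤ q a + q b + c) ∧
      (∀ a b : G, |q (b⁻¹ * a * b) - q a| ≤ c)) ∧
    (∀ C : ℝ, ∃ a : G, C < q a)

/-- If a group admits a quasi-norm then it admits an unbounded
conjugation-invariant norm. -/
theorem unbounded_norm_of_quasiNorm {G : Type*} [Group G]
    (q : G → ℝ) (hq : IsQuasiNorm q) :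
    ∃ ν : G → ℝ, IsConjInvNorm ν ∧ ∀ C : ℝ, ∃ g : G, C < ν g := by
  classical
  obtain ⟨h0, ⟨c, hm, hc⟩, hu⟩ := hq
  have hc0 : 0 ≤ c := (abs_nonneg _).trans (hc 1 1)
  let r : G → G → ℝ := fun a b => max (q (b⁻¹ * a * b)) (q (b⁻¹ * a⁻¹ * b))
  let p : G → ℝ := fun a => ⨆ b, r a b
  have hbdd : ∀ a, BddAbove (Set.range (r a)) := by
    intro a
    refine ⟨max (q a) (q a⁻¹) + c, ?_⟩
    rintro _ ⟨b, rfl⟩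
    have h1 := (abs_le.1 (hc a b)).2
    have h2 := (abs_le.1 (hc a⁻¹ b)).2
    have h3 := le_max_left (q a) (q a⁻¹)
    have h4 := le_max_right (q a) (q a⁻¹)
    exact max_le (by linarith) (by linarith)
  have hrp : ∀ a b, r a b ≤ p a := fun a b => le_ciSup (hbdd a) b
  have hqp : ∀ a, q a ≤ p a := by
    intro a
    refine le_trans ?_ (hrp a 1)
    simp [r]
  have hp0 : ∀ a, 0 ≤ p a := fun a => (h0 a).trans (hqp a)
  have hinv : ∀ a, p a⁻¹ = p a := by
    intro a
    simp only [p, r, inv_inv]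
    exact iSup_congr fun b => max_comm _ _
  have hconj' : ∀ f g, p (g * f * g⁻¹) ≤ p f := by
    intro f g
    refine ciSup_le fun b => ?_
    have h := hrp f (g⁻¹ * b)
    have e : r (g * f * g⁻¹) b = r f (g⁻¹ * b) := by
      simp only [r, mul_inv_rev, inv_inv, mul_assoc]
    rw [e]; exact h
  have hconj : ∀ f g, p (g * f * g⁻¹) = p f := by
    intro f g
    refine le_antisymm (hconj' f g) ?_
    have h := hconj' (g * f * g⁻¹) g⁻¹
    have e : g⁻¹ * (g * f * g⁻¹) * g⁻¹⁻¹ = f := by group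
    rwa [e] at h
  have hsub : ∀ f g, p (f * g) ≤ p f + p g + c := by
    intro f g
    refine ciSup_le fun b => ?_
    have hf := hrp f b
    have hg := hrp g b
    obtain ⟨hf1, hf2⟩ := max_le_iff.1 hf
    obtain ⟨hg1, hg2⟩ := max_le_iff.1 hg
    refine max_le ?_ ?_
    · have h := hm (b⁻¹ * f * b) (b⁻¹ * g * b)
      have e : b⁻¹ * f * b * (b⁻¹ * g * b) = b⁻¹ * (f * g) * b := by group
      rw [e] at h; linarith
    · have h := hm (b⁻¹ * g⁻¹ * b) (b⁻¹ * f⁻¹ * b)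
      have e : b⁻¹ * g⁻¹ * b * (b⁻¹ * f⁻¹ * b) = b⁻¹ * (f * g)⁻¹ * b := by group
      rw [e] at h; linarith
  clear_value p
  have hν0 : ∀ f, 0 ≤ (if f = 1 then 0 else p f + c + 1) := by
    intro f
    have := hp0 f
    split_ifs <;> linarith
  refine ⟨fun a => if a = 1 then 0 else p a + c + 1, ⟨by simp, hν0, ?_, ?_, ?_, ?_⟩, ?_⟩
  · intro f
    simp [hinv]
  · intro f g
    by_cases hf : f = 1
    · simp [hf]
    by_cases hg : g = 1
    · simp [hg]
    have := hp0 f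
    have := hp0 g
    have := hsub f g
    simp only [hf, hg, if_false]
    split_ifs <;> linarith
  · intro f g
    simp only [hconj, conj_eq_one_iff]
  · intro f hf
    have := hp0 f
    simp only [hf, if_false]
    linarith
  · intro C
    obtain ⟨a, ha⟩ := hu (max C (q 1))
    obtain ⟨h1, h2⟩ := max_lt_iff.1 ha
    have hne : a ≠ 1 := by rintro rfl; exact lt_irrefl _ h2
    refine ⟨a, ?_⟩
    have := hqp a
    simp only [hne, if_false]
    linarith
end

section
/- Let G be a group whose abelianization G/[G,G] is finite, and let Ḡ = (G × G) ⋊ ℤ/2 be the extension of G × G by an element t with t² = 1 and t(g₁,g₂)t⁻¹ = (g₂,g₁). If Ḡ admits a stably unbounded conjugation-invariant norm, then Ḡ admits a non-trivial homogeneous quasi-morphism. -/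
/-- The swap automorphism of `G × G`. -/
def swapAut (G : Type*) [Group G] : MulAut (G × G) := MulEquiv.prodComm

/-- The action of `ℤ/2` on `G × G` by swapping the two coordinates. -/
def swapHom (G : Type*) [Group G] : Multiplicative (ZMod 2) →* MulAut (G × G) where
  toFun t := if t = 1 then 1 else swapAut G
  map_one' := if_pos rfl
  map_mul' a b := by
    have h2 : ∀ x : Multiplicative (ZMod 2), x = 1 ∨ x = Multiplicative.ofAdd 1 := by decide
    have hne : (Multiplicative.ofAdd (1 : ZMod 2)) ≠ 1 := by decide
    have hmul : (Multiplicative.ofAdd (1 : ZMod 2)) * Multiplicative.ofAdd 1 = 1 := by decide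
    have hswap : swapAut G * swapAut G = 1 := by
      ext x <;> rfl
    rcases h2 a with ha | ha <;> rcases h2 b with hb | hb <;>
      subst ha <;> subst hb <;> simp [hne, hmul, hswap]

/-- The extension of `G × G` by an element `t` of order 2 which swaps coordinates:
the semidirect product `(G × G) ⋊ ℤ/2`. -/
abbrev GBar (G : Type*) [Group G] :=
  SemidirectProduct (G × G) (Multiplicative (ZMod 2)) (swapHom G)

structure HBd {A : Type*} [AddCommGroup A] (q p : A → ℝ) : Prop where
  add : ∀ x y, p (x + y) ≤ p x + p y
  smul : ∀ (n : ℕ) x, p (n • x) = n * p x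
  le : ∀ x, p x ≤ q x

theorem HBd.lower {A : Type*} [AddCommGroup A] {q p : A → ℝ} (h : HBd q p) (x : A) :
    - q (-x) ≤ p x := by
  have h1 := h.add x (-x)
  have h2 := h.smul 0 0
  have h3 := h.le (-x)
  simp at h1 h2
  linarith

theorem HBd.shift {A : Type*} [AddCommGroup A] {q p : A → ℝ} (h : HBd q p) (y : A) :
    ∃ p', HBd p p' ∧ ∀ (n : ℕ) x, p' x ≤ p (x + n • y) - n * p y := by
  have bdd : ∀ x, BddBelow (Set.range fun n : ℕ => p (x + n • y) - n * p y) := by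
    intro x
    refine ⟨- p (-x), ?_⟩
    rintro _ ⟨n, rfl⟩
    have h1 := h.add (x + n • y) (-x)
    have h2 := h.smul n y
    have : x + n • y + -x = n • y := by abel
    rw [this] at h1
    show _ ≤ p (x + n • y) - n * p y
    linarith
  have key : ∀ (n : ℕ) x, (⨅ n : ℕ, (p (x + n • y) - n * p y)) ≤ p (x + n • y) - n * p y :=
    fun n x => ciInf_le (bdd x) n
  refine ⟨fun x => ⨅ n : ℕ, (p (x + n • y) - n * p y), ⟨?_, ?_, ?_⟩, key⟩
  · intro x z
    refine le_ciInf_add_ciInf fun n m => ?_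
    refine (key (n + m) (x + z)).trans ?_
    have h1 := h.add (x + n • y) (z + m • y)
    have : x + n • y + (z + m • y) = x + z + (n + m) • y := by rw [add_smul]; abel
    rw [this] at h1
    push_cast
    linarith
  · intro k x
    rw [Real.mul_iInf_of_nonneg (Nat.cast_nonneg k)]
    apply le_antisymm
    · refine le_ciInf fun n => (key (k * n) _).trans (le_of_eq ?_)
      rw [mul_smul, ← smul_add, h.smul]
      push_cast; ring
    · refine le_ciInf fun n => ?_
      rcases Nat.eq_zero_or_pos k with rfl | hk
      · refine (ciInf_le ⟨0, ?_⟩ 0).trans ?_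
        · rintro _ ⟨n, rfl⟩; simp
        · simp [h.smul]
      · refine (ciInf_le (f := fun n : ℕ => (k : ℝ) * (p (x + n • y) - n * p y)) ?_ n).trans ?_
        · obtain ⟨b, hb⟩ := bdd x
          refine ⟨k * b, ?_⟩
          rintro _ ⟨n, rfl⟩
          exact mul_le_mul_of_nonneg_left (hb ⟨n, rfl⟩) (Nat.cast_nonneg k)
        · obtain ⟨j, rfl⟩ : ∃ j, k = j + 1 := ⟨k - 1, by omega⟩
          have h1 := h.smul (j + 1) (x + n • y)
          have h2 := h.add ((j + 1) • x + n • y) ((j * n) • y)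
          have h3 := h.smul (j * n) y
          have : (j + 1) • x + n • y + (j * n) • y = (j + 1) • (x + n • y) := by
            rw [smul_add, smul_smul, add_assoc, ← add_smul]; congr 2; ring
          rw [this] at h2
          push_cast at *
          linarith
  · intro x
    simpa using key 0 x

theorem hb_group {A : Type*} [AddCommGroup A] (q : A → ℝ)
    (hadd : ∀ x y, q (x + y) ≤ q x + q y) (hs : ∀ (n : ℕ) x, q (n • x) = n * q x) (a : A) :
    ∃ φ : A → ℝ, (∀ x y, φ (x + y) = φ x + φ y) ∧ (∀ x, φ x ≤ q x) ∧ φ a = q a := by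
  have hq : HBd q q := ⟨hadd, hs, fun _ => le_rfl⟩
  obtain ⟨p0, hp0, hp0'⟩ := hq.shift a
  have hz := zorn_le_nonempty₀ (α := (A → ℝ)ᵒᵈ) {p | HBd q (OrderDual.ofDual p)} ?_
    (OrderDual.toDual p0) ⟨hp0.add, hp0.smul, hp0.le⟩
  · obtain ⟨m, hm, hmax⟩ := hz
    set p := OrderDual.ofDual m with hp
    have hpq : HBd q p := hmax.prop
    have hmin : ∀ p', HBd p p' → ∀ x, p x ≤ p' x := by
      intro p' h'
      have : HBd q p' := ⟨h'.add, h'.smul, fun x => (h'.le x).trans (hpq.le x)⟩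
      exact hmax.le_of_ge (y := OrderDual.toDual p') this h'.le
    have hle : ∀ x, p x ≤ p0 x := hm
    refine ⟨p, fun x y => le_antisymm (hpq.add x y) ?_, hpq.le, le_antisymm (hpq.le a) ?_⟩
    · obtain ⟨p', h1, h2⟩ := hpq.shift y
      have h3 := h2 1 x
      have h4 := hmin p' h1 x
      simp at h3
      linarith
    · have h1 := hp0' 1 (-a)
      have h2 := hle (-a)
      have h3 := hpq.add a (-a)
      have h4 := hpq.smul 0 0
      have h5 := hs 0 0
      simp at h1 h3 h4 h5
      linarith
  · intro c hc hchain y hy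
    have : Nonempty c := ⟨⟨y, hy⟩⟩
    have bdd : ∀ x, BddBelow (Set.range fun p : c => (OrderDual.ofDual p.1) x) := by
      intro x
      refine ⟨- q (-x), ?_⟩
      rintro _ ⟨p, rfl⟩
      exact HBd.lower (hc p.2) x
    have key : ∀ (p : c) x, (⨅ p : c, (OrderDual.ofDual p.1) x) ≤ (OrderDual.ofDual p.1) x :=
      fun p x => ciInf_le (bdd x) p
    refine ⟨OrderDual.toDual fun x => ⨅ p : c, (OrderDual.ofDual p.1) x, ⟨?_, ?_, ?_⟩, ?_⟩
    · intro x z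
      simp only [OrderDual.ofDual_toDual]
      refine le_ciInf_add_ciInf fun p1 p2 => ?_
      rcases hchain.total p1.2 p2.2 with h | h
      · have h1 := (hc p2.2).add x z
        have h2 : (OrderDual.ofDual p2.1) x ≤ (OrderDual.ofDual p1.1) x := h x
        have := key p2 (x + z)
        linarith
      · have h1 := (hc p1.2).add x z
        have h2 : (OrderDual.ofDual p1.1) z ≤ (OrderDual.ofDual p2.1) z := h z
        have := key p1 (x + z)
        linarith
    · intro n x
      simp only [OrderDual.ofDual_toDual]
      rw [Real.mul_iInf_of_nonneg (Nat.cast_nonneg n)]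
      exact iInf_congr fun p => (hc p.2).smul n x
    · intro x
      exact (key ⟨y, hy⟩ x).trans ((hc hy).le x)
    · intro z hz x
      exact key ⟨z, hz⟩ x

/-- Evaluation of a word after raising letters to the `n`-th power. -/
def powEval {G : Type*} [Group G] (n : ℕ) : FreeGroup G →* G := FreeGroup.lift fun g => g ^ n

/-- Class of a word in the abelianization. -/
def wcls {G : Type*} [Group G] : FreeGroup G →* Abelianization (FreeGroup G) := Abelianization.of

/-- Admissible growth constants. -/
def Adm {G : Type*} [Group G] (μ : G → ℝ) (x : Additive (Abelianization (FreeGroup G)))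
    (C : ℝ) : Prop :=
  0 ≤ C ∧ ∃ (k : ℕ) (w : FreeGroup G) (D : ℝ), 0 < k ∧ Additive.ofMul (wcls w) = k • x ∧
    ∀ n : ℕ, μ (powEval n w) ≤ C * k * n + D

theorem npow_bound {G : Type*} [Group G] (μ : G → ℝ) (h1 : μ 1 = 0)
    (hmul : ∀ f g, μ (f * g) ≤ μ f + μ g) (x : G) (n : ℕ) : μ (x ^ n) ≤ n * μ x := by
  induction n with
  | zero => simp [h1]
  | succ n ih =>
    rw [pow_succ]; push_cast
    linarith [hmul (x ^ n) x]

theorem comm_bound {G : Type*} [Group G] (μ : G → ℝ) (h1 : μ 1 = 0)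
    (hmul : ∀ f g, μ (f * g) ≤ μ f + μ g) (hconj : ∀ f g, μ (g * f * g⁻¹) = μ f)
    (K : ℝ) (hK : ∀ a b : G, μ (a * b * a⁻¹ * b⁻¹) ≤ K) (a b : G) (n : ℕ) :
    μ (a ^ n * b ^ n * ((a * b) ^ n)⁻¹) ≤ K * n := by
  induction n with
  | zero => simp [h1]
  | succ n ih =>
    have e : a ^ (n + 1) * b ^ (n + 1) * ((a * b) ^ (n + 1))⁻¹ =
        (a ^ n * (a * b ^ n * a⁻¹ * (b ^ n)⁻¹) * (a ^ n)⁻¹) *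
          (a ^ n * b ^ n * ((a * b) ^ n)⁻¹) := by
      rw [pow_succ a, pow_succ b, pow_succ (a * b)]; group
    rw [e]
    have h2 := hmul (a ^ n * (a * b ^ n * a⁻¹ * (b ^ n)⁻¹) * (a ^ n)⁻¹)
      (a ^ n * b ^ n * ((a * b) ^ n)⁻¹)
    rw [hconj] at h2
    have := hK a (b ^ n)
    push_cast
    linarith

theorem qm_of_norm {G : Type*} [Group G] (μ : G → ℝ) (h1 : μ 1 = 0) (h0 : ∀ f, 0 ≤ μ f)
    (hinv : ∀ f, μ f⁻¹ = μ f)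
    (hmul : ∀ f g, μ (f * g) ≤ μ f + μ g) (hconj : ∀ f g, μ (g * f * g⁻¹) = μ f)
    (K : ℝ) (hK : ∀ a b : G, μ (a * b * a⁻¹ * b⁻¹) ≤ K) (g h : G) (L D : ℝ) (hL : 0 < L)
    (hgh : ∀ n : ℕ, L * n - D ≤ μ (g ^ n * h ^ n)) :
    ∃ (φ : G → ℝ) (C : ℝ), (∀ a b, |φ (a * b) - φ a - φ b| ≤ C) ∧
      (∀ a (n : ℤ), φ (a ^ n) = n * φ a) ∧ 0 < φ g + φ h := by
  have hpw := npow_bound μ h1 hmul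
  have hK0 : 0 ≤ K := (h0 _).trans (hK 1 1)
  have hnat : ∀ (n k : ℕ) (w : FreeGroup G), μ (powEval n (w ^ k)) ≤ k * μ (powEval n w) := by
    intro n k w; rw [map_pow]; exact hpw _ _
  -- every class is admissible
  have hex : ∀ w : FreeGroup G, ∃ C, 0 ≤ C ∧ ∀ n : ℕ, μ (powEval n w) ≤ C * n := by
    intro w
    induction w using FreeGroup.induction_on with
    | C1 => exact ⟨0, le_rfl, fun n => by simp [h1]⟩
    | of x => exact ⟨μ x, h0 _, fun n => by
        have := hpw x n
        simp [powEval]; linarith⟩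
    | inv_of x ih =>
      obtain ⟨C, hC, h⟩ := ih
      exact ⟨C, hC, fun n => by rw [map_inv, hinv]; exact h n⟩
    | mul x y hx hy =>
      obtain ⟨C, hC, h⟩ := hx
      obtain ⟨C', hC', h'⟩ := hy
      refine ⟨C + C', by linarith, fun n => ?_⟩
      rw [map_mul]
      linarith [hmul (powEval n x) (powEval n y), h n, h' n]
  have hne : ∀ x, ∃ C, Adm μ x C := by
    intro x
    obtain ⟨w, hw⟩ := QuotientGroup.mk_surjective x.toMul
    obtain ⟨C, hC, h⟩ := hex w
    refine ⟨C, hC, 1, w, 0, one_pos, ?_, fun n => by simpa using h n⟩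
    rw [one_smul]
    exact congrArg Additive.ofMul hw
  have bdd : ∀ x, BddBelow {C | Adm μ x C} := fun x => ⟨0, fun C hC => hC.1⟩
  set q : Additive (Abelianization (FreeGroup G)) → ℝ := fun x => sInf {C | Adm μ x C} with hq
  have qle : ∀ x C, Adm μ x C → q x ≤ C := fun x C h => csInf_le (bdd x) h
  have leq : ∀ x B, (∀ C, Adm μ x C → B ≤ C) → B ≤ q x := fun x B h => le_csInf (hne x) h
  have q0 : ∀ x, 0 ≤ q x := fun x => leq x 0 fun C h => h.1
  have aadd : ∀ x y C C', Adm μ x C → Adm μ y C' → Adm μ (x + y) (C + C') := by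
    rintro x y C C' ⟨hC, k, w, D, hk, hw, hb⟩ ⟨hC', k', w', D', hk', hw', hb'⟩
    refine ⟨by linarith, k * k', w ^ k' * w' ^ k, k' * D + k * D', by positivity, ?_, ?_⟩
    · rw [map_mul, map_pow, map_pow, ofMul_mul, ofMul_pow, ofMul_pow, hw, hw', smul_add,
        smul_smul, smul_smul, mul_comm k' k]
    · intro n
      rw [map_mul]
      have e1 := hmul (powEval n (w ^ k')) (powEval n (w' ^ k))
      have e2 := (hnat n k' w).trans (mul_le_mul_of_nonneg_left (hb n) (Nat.cast_nonneg _))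
      have e3 := (hnat n k w').trans (mul_le_mul_of_nonneg_left (hb' n) (Nat.cast_nonneg _))
      push_cast
      linarith
  have qadd : ∀ x y, q (x + y) ≤ q x + q y := by
    intro x y
    have : ∀ C, Adm μ x C → q (x + y) - C ≤ q y := fun C hC => leq _ _ fun C' hC' => by
      linarith [qle _ _ (aadd x y C C' hC hC')]
    have := leq x (q (x + y) - q y) fun C hC => by linarith [this C hC]
    linarith
  have qsmul : ∀ (m : ℕ) x, q (m • x) = m * q x := by
    intro m x
    rcases Nat.eq_zero_or_pos m with rfl | hm
    · have : q 0 ≤ 0 := qle 0 0 ⟨le_rfl, 1, 1, 0, one_pos, by simp, fun n => by simp [h1]⟩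
      simpa using le_antisymm this (q0 0)
    have hm' : (0 : ℝ) < m := by exact_mod_cast hm
    apply le_antisymm
    · rw [mul_comm, ← div_le_iff₀ hm']
      refine leq _ _ ?_
      rintro C ⟨hC, k, w, D, hk, hw, hb⟩
      rw [div_le_iff₀ hm']
      refine qle _ _ ⟨by positivity, k, w ^ m, m * D, hk, ?_, fun n => ?_⟩
      · rw [map_pow, ofMul_pow, hw, smul_smul, smul_smul, mul_comm]
      · have e2 := (hnat n m w).trans (mul_le_mul_of_nonneg_left (hb n) (Nat.cast_nonneg _))
        linarith
    · refine leq _ _ ?_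
      rintro C ⟨hC, k, w, D, hk, hw, hb⟩
      rw [mul_comm, ← le_div_iff₀ hm']
      refine qle _ _ ⟨by positivity, k * m, w, D, by positivity, ?_, fun n => ?_⟩
      · rw [hw, smul_smul]
      · refine (hb n).trans (le_of_eq ?_)
        push_cast; field_simp
  obtain ⟨φ, φadd, φle, φa⟩ := hb_group q qadd qsmul
    (Additive.ofMul (wcls (FreeGroup.of g * FreeGroup.of h)))
  have φ0 : φ 0 = 0 := by have := φadd 0 0; simp at this; exact this
  have φneg : ∀ x, φ (-x) = - φ x := fun x => by
    have := φadd x (-x); rw [add_neg_cancel, φ0] at this; linarith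
  have wle : ∀ (w : FreeGroup G) (C : ℝ), 0 ≤ C → (∀ n : ℕ, μ (powEval n w) ≤ C * n) →
      |φ (Additive.ofMul (wcls w))| ≤ C := by
    intro w C hC hb
    rw [abs_le']
    constructor
    · refine (φle _).trans (qle _ _ ⟨hC, 1, w, 0, one_pos, by simp, fun n => by simpa using hb n⟩)
    · rw [← φneg]
      refine (φle _).trans (qle _ _ ⟨hC, 1, w⁻¹, 0, one_pos, by simp, fun n => ?_⟩)
      rw [map_inv, hinv]
      simpa using hb n
  have φz : ∀ (x) (n : ℤ), φ (n • x) = n * φ x := by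
    intro x n
    have := map_zsmul (AddMonoidHom.mk' φ φadd) n x
    simpa using this
  refine ⟨fun a => φ (Additive.ofMul (wcls (FreeGroup.of a))), K, ?_, ?_, ?_⟩
  · intro a b
    have := wle (FreeGroup.of a * FreeGroup.of b * (FreeGroup.of (a * b))⁻¹) K hK0 fun n => by
      simpa [powEval] using comm_bound μ h1 hmul hconj K hK a b n
    simp only [map_mul, map_inv, ofMul_mul, ofMul_inv, φadd, φneg] at this
    rw [← abs_neg]
    convert this using 2
    ring
  · intro a n
    have := wle (FreeGroup.of (a ^ n) * ((FreeGroup.of a) ^ n)⁻¹) 0 le_rfl fun m => by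
      have e : powEval m (FreeGroup.of (a ^ n) * ((FreeGroup.of a) ^ n)⁻¹) = 1 := by
        simp only [powEval, map_mul, map_inv, map_zpow, FreeGroup.lift_apply_of]
        rw [← zpow_natCast, ← zpow_natCast, ← zpow_mul, ← zpow_mul, mul_comm]; simp
      rw [e, h1]; simp
    simp only [map_mul, map_inv, map_zpow, ofMul_mul, ofMul_inv, ofMul_zpow, φadd, φneg, φz] at this
    have := abs_nonpos_iff.mp this
    simp only
    linarith
  · simp only
    rw [← φadd, ← ofMul_mul, ← map_mul, φa]
    refine hL.trans_le (leq _ _ ?_)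
    rintro C ⟨hC, k, w, D', hk, hw, hb⟩
    -- words of trivial class have bounded norm
    let B : Subgroup (FreeGroup G) :=
      { carrier := {c | ∃ D, ∀ n : ℕ, μ (powEval n c) ≤ D}
        one_mem' := ⟨0, fun n => by simp [h1]⟩
        mul_mem' := by
          rintro a b ⟨D1, h1⟩ ⟨D2, h2⟩
          exact ⟨D1 + D2, fun n => by
            rw [map_mul]; linarith [hmul (powEval n a) (powEval n b), h1 n, h2 n]⟩
        inv_mem' := by
          rintro a ⟨D1, h1⟩
          exact ⟨D1, fun n => by rw [map_inv, hinv]; exact h1 n⟩ }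
    have hB : commutator (FreeGroup G) ≤ B := by
      rw [commutator_def, Subgroup.commutator_le]
      intro a _ b _
      refine ⟨K, fun n => ?_⟩
      rw [commutatorElement_def]
      simpa using hK (powEval n a) (powEval n b)
    have hw' : wcls w = wcls (FreeGroup.of g ^ k * FreeGroup.of h ^ k) := by
      have : wcls w = (wcls (FreeGroup.of g * FreeGroup.of h)) ^ k := hw
      rw [this, map_mul, map_mul, mul_pow, map_pow, map_pow]
    obtain ⟨E, hE⟩ : w⁻¹ * (FreeGroup.of g ^ k * FreeGroup.of h ^ k) ∈ B :=
      hB (QuotientGroup.eq.mp hw')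
    have fin : ∀ n : ℕ, L * k * n - D ≤ C * k * n + D' + E := by
      intro n
      have e1 := hmul (powEval n w) (powEval n (w⁻¹ * (FreeGroup.of g ^ k * FreeGroup.of h ^ k)))
      rw [← map_mul, mul_inv_cancel_left] at e1
      have e2 : powEval n (FreeGroup.of g ^ k * FreeGroup.of h ^ k) =
        g ^ (k * n) * h ^ (k * n) := by
        simp [powEval, ← pow_mul, mul_comm]
      rw [e2] at e1
      have e3 := hgh (k * n)
      push_cast at e3
      linarith [hE n, hb n]
    by_contra hlt
    push Not at hlt
    have hk' : (0 : ℝ) < k := by exact_mod_cast hk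
    obtain ⟨n, hn⟩ := exists_nat_gt ((D + D' + E) / ((L - C) * k))
    rw [div_lt_iff₀ (mul_pos (by linarith) hk')] at hn
    nlinarith [fin n]

theorem GBar_conj_t {G : Type*} [Group G] (a b : G) :
    (SemidirectProduct.inr (Multiplicative.ofAdd 1) : GBar G) * SemidirectProduct.inl (a, b) *
      (SemidirectProduct.inr (Multiplicative.ofAdd 1))⁻¹ = SemidirectProduct.inl (b, a) := by
  rw [← map_inv, ← SemidirectProduct.inl_aut]
  rfl

theorem GBar_cases {G : Type*} [Group G] (x : GBar G) :
    (swapHom G x.right = 1 ∧ x.right = 1) ∨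
      (swapHom G x.right = swapAut G ∧ x.right * x.right = 1) := by
  have h2 : ∀ x : Multiplicative (ZMod 2), x = 1 ∨ x = Multiplicative.ofAdd 1 := by decide
  rcases h2 x.right with h | h
  · left; simp [h]
  · right; rw [h]; exact ⟨rfl, rfl⟩

theorem GBar_right_sq {G : Type*} [Group G] (x : GBar G) : (x ^ 2).right = 1 := by
  rw [pow_two, SemidirectProduct.mul_right]
  rcases GBar_cases x with h | h
  · simp [h.2]
  · exact h.2

theorem GBar_sq {G : Type*} [Group G] (x : GBar G) :
    x ^ 2 = SemidirectProduct.inl (x ^ 2).left := by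
  ext
  · simp
  · simp
  · rw [GBar_right_sq]; simp

theorem GBar_extend {G : Type*} [Group G] (φ : G → ℝ) (C : ℝ)
    (hφ : ∀ a b, |φ (a * b) - φ a - φ b| ≤ C) (hz : ∀ a (n : ℤ), φ (a ^ n) = n * φ a) :
    ∃ r : GBar G → ℝ,
      (∃ C : ℝ, ∀ a b : GBar G, |r (a * b) - r a - r b| ≤ C) ∧
      (∀ (a : GBar G) (n : ℤ), r (a ^ n) = n * r a) ∧
      ∀ a : G, r (SemidirectProduct.inl (a, 1)) = φ a := by
  have C0 : 0 ≤ C := (abs_nonneg _).trans (hφ 1 1)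
  have φ2 : ∀ a, φ (a * a) = 2 * φ a := fun a => by
    have := hz a 2; rw [zpow_two] at this; exact_mod_cast this
  have φ1 : φ 1 = 0 := by have := hz 1 0; simpa using this
  let r : GBar G → ℝ := fun x => (φ (x ^ 2).left.1 + φ (x ^ 2).left.2) / 2
  have near : ∀ x : GBar G, |r x - (φ x.left.1 + φ x.left.2)| ≤ C := by
    intro x
    simp only [r, pow_two, SemidirectProduct.mul_left]
    rcases GBar_cases x with h | h
    · rw [h.1]
      simp only [MulAut.one_apply, Prod.fst_mul, Prod.snd_mul, φ2]
      convert C0 using 1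
      rw [abs_eq_zero]; ring
    · rw [h.1]
      simp only [swapAut, Prod.fst_mul, Prod.snd_mul, MulEquiv.coe_prodComm, Prod.fst_swap,
        Prod.snd_swap]
      have e1 := abs_le.mp (hφ x.left.1 x.left.2)
      have e2 := abs_le.mp (hφ x.left.2 x.left.1)
      rw [abs_le]; constructor <;> linarith
  have mulnear : ∀ x y : GBar G, |(φ (x * y).left.1 + φ (x * y).left.2) -
      (φ x.left.1 + φ x.left.2) - (φ y.left.1 + φ y.left.2)| ≤ 2 * C := by
    intro x y
    simp only [SemidirectProduct.mul_left]
    rcases GBar_cases x with h | h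
    · rw [h.1]
      simp only [MulAut.one_apply, Prod.fst_mul, Prod.snd_mul]
      have e1 := abs_le.mp (hφ x.left.1 y.left.1)
      have e2 := abs_le.mp (hφ x.left.2 y.left.2)
      rw [abs_le]; constructor <;> linarith
    · rw [h.1]
      simp only [swapAut, Prod.fst_mul, Prod.snd_mul, MulEquiv.coe_prodComm, Prod.fst_swap,
        Prod.snd_swap]
      have e1 := abs_le.mp (hφ x.left.1 y.left.2)
      have e2 := abs_le.mp (hφ x.left.2 y.left.1)
      rw [abs_le]; constructor <;> linarith
  refine ⟨r, ⟨5 * C, fun x y => ?_⟩, ?_, ?_⟩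
  · have e1 := abs_le.mp (near x)
    have e2 := abs_le.mp (near y)
    have e3 := abs_le.mp (near (x * y))
    have e4 := abs_le.mp (mulnear x y)
    rw [abs_le]; constructor <;> linarith
  · intro x n
    have e : ((x ^ n) ^ 2).left = (x ^ 2).left ^ n := by
      have : (x ^ n) ^ 2 = SemidirectProduct.inl ((x ^ 2).left ^ n) := by
        rw [map_zpow, ← GBar_sq, ← zpow_natCast, ← zpow_natCast, ← zpow_mul, ← zpow_mul, mul_comm]
      rw [this, SemidirectProduct.left_inl]
    have p1 : ((x ^ 2).left ^ n).1 = (x ^ 2).left.1 ^ n := rfl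
    have p2 : ((x ^ 2).left ^ n).2 = (x ^ 2).left.2 ^ n := rfl
    simp only [r, e, p1, p2, hz]
    ring
  · intro a
    simp only [r, ← map_pow, SemidirectProduct.left_inl]
    simp [pow_two, φ2, φ1]

/-- If `G` has finite abelianization and `Ḡ = (G × G) ⋊ ℤ/2` admits a stably
unbounded conjugation-invariant norm, then `Ḡ` admits a non-trivial homogeneous
quasi-morphism. -/
theorem GBar_quasimorphism_of_stably_unbounded_norm {G : Type*} [Group G]
    (hG : Finite (Abelianization G))
    (ν : GBar G → ℝ) (hν : IsConjInvNorm ν)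
    (hstab : ∃ (f : GBar G) (L : ℝ), L ≠ 0 ∧
      Filter.Tendsto (fun n : ℕ => ν (f ^ n) / n) Filter.atTop (nhds L)) :
    ∃ r : GBar G → ℝ,
      (∃ C : ℝ, ∀ a b : GBar G, |r (a * b) - r a - r b| ≤ C) ∧
      (∀ (a : GBar G) (n : ℤ), r (a ^ n) = n * r a) ∧
      ¬ (∀ a b : GBar G, r (a * b) = r a + r b) := by
  obtain ⟨h1, h0, hinv, hmul, hconj, -⟩ := hν
  obtain ⟨f, L, hL, hlim⟩ := hstab
  have hpw := npow_bound ν h1 hmul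
  have hLpos : 0 < L := lt_of_le_of_ne
    (ge_of_tendsto' hlim fun n => div_nonneg (h0 _) (Nat.cast_nonneg _)) hL.symm
  have hlow : ∀ k : ℕ, L * k ≤ ν (f ^ k) := by
    intro k
    rcases Nat.eq_zero_or_pos k with rfl | hk
    · simp [h1]
    have hk' : (0 : ℝ) < k := by exact_mod_cast hk
    rw [← le_div_iff₀ hk']
    have ht : Filter.Tendsto (fun n : ℕ => n * k) Filter.atTop Filter.atTop :=
      Filter.tendsto_id.atTop_mul_const' hk
    refine le_of_tendsto (hlim.comp ht) ?_
    filter_upwards [Filter.eventually_gt_atTop 0] with n hn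
    have hn' : (0 : ℝ) < n := by exact_mod_cast hn
    have := hpw (f ^ k) n
    rw [← pow_mul, mul_comm k n] at this
    simp only [Function.comp]
    push_cast
    rw [div_le_div_iff₀ (by positivity) hk']
    nlinarith
  set t : GBar G := SemidirectProduct.inr (Multiplicative.ofAdd 1) with ht
  have anti : ∀ x : G, ν (SemidirectProduct.inl (x, x⁻¹)) ≤ 2 * ν t := by
    intro x
    have e : (SemidirectProduct.inl (x, x⁻¹) : GBar G) =
        (SemidirectProduct.inl (x, 1) * t * (SemidirectProduct.inl (x, 1))⁻¹) * t⁻¹ := by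
      rw [← map_inv, mul_assoc, mul_assoc, ← mul_assoc t]
      simp only [Prod.inv_mk]
      rw [GBar_conj_t, ← map_mul]
      simp
    rw [e]
    refine (hmul _ _).trans ?_
    rw [hconj, hinv]; linarith
  obtain ⟨g, h, hgh⟩ : ∃ g h : G, f ^ 2 = SemidirectProduct.inl (g, h) :=
    ⟨_, _, GBar_sq f⟩
  obtain ⟨φ, C, hφ, hz, hpos⟩ := qm_of_norm (fun x : G => ν (SemidirectProduct.inl (x, 1)))
    (by rw [← Prod.one_eq_mk, map_one]; exact h1) (fun x => h0 _)
    (fun x => by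
      rw [← hinv, ← map_inv]; simp)
    (fun x y => by
      refine le_trans (le_of_eq ?_) (hmul _ _)
      rw [← map_mul]; simp)
    (fun x y => by
      rw [← hconj (SemidirectProduct.inl (x, 1)) (SemidirectProduct.inl (y, 1)), ← map_inv,
        ← map_mul, ← map_mul]; simp)
    (4 * ν t)
    (fun x y => by
      have e : (SemidirectProduct.inl (x * y * x⁻¹ * y⁻¹, 1) : GBar G) =
        SemidirectProduct.inl (x, x⁻¹) * (SemidirectProduct.inl (y, 1) *
          (SemidirectProduct.inl (x, x⁻¹))⁻¹ * (SemidirectProduct.inl (y, 1))⁻¹) := by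
        simp only [← map_inv, ← map_mul]
        simp [mul_assoc]
      rw [e]
      refine (hmul _ _).trans ?_
      rw [hconj, hinv]
      linarith [anti x])
    g h (2 * L) (2 * ν t) (by linarith)
    (fun n => by
      have e : f ^ (2 * n) = SemidirectProduct.inl (g ^ n * h ^ n, 1) *
          SemidirectProduct.inl ((h ^ n)⁻¹, (h ^ n)⁻¹⁻¹) := by
        rw [pow_mul, hgh, ← map_pow, ← map_mul]; simp
      have e1 := hlow (2 * n)
      rw [e] at e1
      have e2 := hmul (SemidirectProduct.inl (g ^ n * h ^ n, 1))
        (SemidirectProduct.inl ((h ^ n)⁻¹, (h ^ n)⁻¹⁻¹))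
      have e3 := anti (h ^ n)⁻¹
      push_cast at e1
      linarith)
  obtain ⟨r, hr, hrz, hrφ⟩ := GBar_extend φ C hφ hz
  refine ⟨r, hr, hrz, fun hhom => ?_⟩
  have φmul : ∀ a b, φ (a * b) = φ a + φ b := by
    intro a b
    rw [← hrφ, ← hrφ, ← hrφ, ← hhom, ← map_mul]; simp
  let Φ : G →* Multiplicative ℝ := MonoidHom.mk' (fun a => Multiplicative.ofAdd (φ a))
    fun a b => by rw [φmul, ofAdd_add]
  have φzero : ∀ a, φ a = 0 := by
    intro a
    obtain ⟨n, hn, hn'⟩ := (isOfFinOrder_of_finite (Abelianization.of a)).exists_pow_eq_one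
    have e : Φ (a ^ n) = 1 := by
      rw [← Abelianization.lift_apply_of Φ, map_pow, hn', map_one]
    have e' : φ (a ^ n) = 0 := e
    have e2 := hz a n
    rw [zpow_natCast, e'] at e2
    have hn'' : ((n : ℤ) : ℝ) ≠ 0 := by exact_mod_cast hn.ne'
    rcases mul_eq_zero.mp e2.symm with h | h
    · exact absurd h hn''
    · exact h
  rw [φzero, φzero] at hpos
  simp at hpos
end

section
/- The infinite dihedral group Aff(ℤ) — the extension of ℤ by an element t with t² = 1 and tzt⁻¹ = z⁻¹ for the generator z of ℤ — is a bounded group: every conjugation-invariant norm on it is bounded. (Key fact used: t is conjugate to tz^{2n} for every integer n, via conjugation by zⁿ.) -/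
/-- The infinite dihedral group `ℤ ⋊ ℤ/2` (realized as `DihedralGroup 0`,
since `ZMod 0 = ℤ`) is bounded: every conjugation-invariant norm on it is
bounded. -/
theorem infinite_dihedral_bounded (ν : DihedralGroup 0 → ℝ)
    (hν : IsConjInvNorm ν) : ∃ C : ℝ, ∀ g : DihedralGroup 0, ν g ≤ C := by
  obtain ⟨-, h0, -, hmul, hconj, -⟩ := hν
  have hs : ∀ i : ZMod 0, ν (DihedralGroup.sr i) ≤
      ν (DihedralGroup.sr 0) + ν (DihedralGroup.sr 1) := by
    intro i
    have key : ∀ j k : ZMod 0, ν (DihedralGroup.sr (j - k - k)) = ν (DihedralGroup.sr j) := by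
      intro j k
      have h := hconj (DihedralGroup.sr j) (DihedralGroup.r k)
      rw [DihedralGroup.inv_r, DihedralGroup.r_mul_sr, DihedralGroup.sr_mul_r,
        ← sub_eq_add_neg] at h
      exact h
    have a0 := h0 (DihedralGroup.sr 0)
    have a1 := h0 (DihedralGroup.sr 1)
    have par : ∃ k : ZMod 0, i - k - k = 0 ∨ i - k - k = 1 := by
      have hZ : ∀ n : ℤ, ∃ k : ℤ, n - k - k = 0 ∨ n - k - k = 1 :=
        fun n => ⟨n / 2, by omega⟩
      exact hZ i
    obtain ⟨k, hk | hk⟩ := par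
    · rw [← key i k, hk]
      linarith
    · rw [← key i k, hk]
      linarith
  refine ⟨2 * (ν (DihedralGroup.sr 0) + ν (DihedralGroup.sr 1)), ?_⟩
  have a0 := h0 (DihedralGroup.sr 0)
  have a1 := h0 (DihedralGroup.sr 1)
  rintro (i | i)
  · have h := hmul (DihedralGroup.sr 0) (DihedralGroup.sr i)
    rw [DihedralGroup.sr_mul_sr, sub_zero] at h
    have := hs i
    linarith
  · have := hs i
    linarith
end
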